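/- Let (Ω, F, Q) be a probability space with a filtration (F_k)_{k∈ℕ}, Δt > 0, and let (N_k)_{k≥1} be ℕ-valued random variables such that each N_k is F_k-measurable, is independent of F_{k−1}, and has law Poisson(Δt) under Q. Let (λ_k)_{k≥1} satisfy: each λ_k is F_{k−1}-measurable and 0 < λ_k ≤ C for a constant C. Fix n ≥ 1, define Z_n := ∏_{k=1}^n λ_k^{N_k} · exp(−(λ_k−1)·Δt) and the probability measure P := Q.withDensity Z_n. Then the compensated process M_k := ∑_{i=1}^k (N_i − λ_i·Δt), for 0 ≤ k ≤ n, is a martingale with respect to (F_k) under P. (This is the discrete-time analogue of the second assertion of the paper's Theorem 1: under the changed measure dP = Z dQ, the innovation Y_t − ∫₀ᵗ λ_s ds becomes a P-martingale.) -/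

import Mathlib

open MeasureTheory ProbabilityTheory Real

open scoped NNReal ENNReal

/-!
Tilting `Poisson(Δt)` by the likelihood ratio `j ↦ l ^ j * exp (-(l - 1) * Δt)` gives
`Poisson(l * Δt)`. Since `N (k + 1)` is independent of `F k`, which already knows `lam (k + 1)`,
one may tilt with the intensity frozen: the `k`-th and `(k + 1)`-st changed measures agree on `F k`,
and under the latter `N (k + 1)` has conditional law `Poisson(lam (k + 1) * Δt)` given `F k`.
The mean of that law is the compensator.
-/

section Independence

variable {Ω α β : Type*} {mΩ : MeasurableSpace Ω} [MeasurableSpace α] [MeasurableSpace β]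

lemma lintegral_comp_prodMk_of_indepFun {μ : Measure Ω} [IsFiniteMeasure μ] {X : Ω → α} {Y : Ω → β}
    (hXY : IndepFun X Y μ) (hX : Measurable X) (hY : Measurable Y) {f : α × β → ℝ≥0∞}
    (hf : Measurable f) :
    ∫⁻ ω, f (X ω, Y ω) ∂μ = ∫⁻ ω, ∫⁻ x, f (x, Y ω) ∂(μ.map X) ∂μ := by
  rw [← lintegral_map hf (hX.prodMk hY),
    hXY.map_prod_eq_prod_map_map hX.aemeasurable hY.aemeasurable, lintegral_prod_symm' f hf,
    lintegral_map hf.lintegral_prod_left' hY]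

end Independence

section Poisson

/-- The likelihood ratio at the count `j` of the law `Poisson(l * Δt)` against the reference law
`Poisson(Δt)`, for a rate `l ≥ 0`. -/
noncomputable def poissonLikelihoodRatio (Δt : ℝ≥0) (l : ℝ) (j : ℕ) : ℝ :=
  l ^ j * exp (-(l - 1) * Δt)

lemma poissonLikelihoodRatio_nonneg (Δt : ℝ≥0) {l : ℝ} (hl : 0 ≤ l) (j : ℕ) :
    0 ≤ poissonLikelihoodRatio Δt l j := by
  unfold poissonLikelihoodRatio
  positivity

lemma measurable_poissonLikelihoodRatio (Δt : ℝ≥0) :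
    Measurable fun p : ℝ × ℕ ↦ poissonLikelihoodRatio Δt p.1 p.2 := by
  unfold poissonLikelihoodRatio
  fun_prop

lemma poissonMeasure_withDensity_likelihoodRatio (Δt l : ℝ≥0) :
    (poissonMeasure Δt).withDensity (fun j ↦ ENNReal.ofReal (poissonLikelihoodRatio Δt l j)) =
      poissonMeasure (l * Δt) := by
  refine Measure.ext_of_singleton fun j ↦ ?_
  have hexp : exp (-(l * Δt : ℝ)) = exp (-(l - 1 : ℝ) * Δt) * exp (-(Δt : ℝ)) := by
    rw [← exp_add]
    ring_nf
  rw [withDensity_apply _ (measurableSet_singleton j), lintegral_singleton,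
    poissonMeasure_singleton, poissonMeasure_singleton,
    ← ENNReal.ofReal_mul (poissonLikelihoodRatio_nonneg Δt l.coe_nonneg j)]
  congr 1
  rw [poissonLikelihoodRatio, NNReal.coe_mul, hexp, mul_pow]
  ring

lemma lintegral_likelihoodRatio_mul_poissonMeasure (Δt : ℝ≥0) {l : ℝ} (hl : 0 ≤ l)
    (h : ℕ → ℝ≥0∞) :
    ∫⁻ j, ENNReal.ofReal (poissonLikelihoodRatio Δt l j) * h j ∂(poissonMeasure Δt) =
      ∫⁻ j, h j ∂(poissonMeasure (l.toNNReal * Δt)) := by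
  lift l to ℝ≥0 using hl
  rw [Real.toNNReal_coe, ← poissonMeasure_withDensity_likelihoodRatio,
    lintegral_withDensity_eq_lintegral_mul _ .of_discrete .of_discrete]
  rfl

lemma measurable_poissonMeasure : Measurable poissonMeasure := by
  refine Measure.measurable_of_measurable_coe _ fun s hs ↦ ?_
  simp only [poissonMeasure, Measure.sum_apply _ hs, Measure.smul_apply, smul_eq_mul]
  fun_prop

lemma lintegral_natCast_poissonMeasure (r : ℝ≥0) : ∫⁻ j, (j : ℝ≥0∞) ∂(poissonMeasure r) = r := by
  have hshift (j : ℕ) : ((j + 1 : ℕ) : ℝ≥0∞) * poissonMeasure r {j + 1} =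
      r * poissonMeasure r {j} := by
    rw [poissonMeasure_singleton, poissonMeasure_singleton, ← ENNReal.ofReal_natCast,
      ← ENNReal.ofReal_coe_nnreal, ← ENNReal.ofReal_mul (by positivity),
      ← ENNReal.ofReal_mul r.coe_nonneg, Nat.factorial_succ]
    congr 1
    push_cast
    field_simp
    ring
  calc ∫⁻ j, (j : ℝ≥0∞) ∂(poissonMeasure r)
      = ∑' j : ℕ, (j : ℝ≥0∞) * poissonMeasure r {j} := lintegral_countable' _
    _ = ∑' j : ℕ, ((j + 1 : ℕ) : ℝ≥0∞) * poissonMeasure r {j + 1} := by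
        rw [tsum_eq_zero_add' ENNReal.summable, Nat.cast_zero, zero_mul, zero_add]
    _ = r * ∑' j : ℕ, poissonMeasure r {j} := by simp_rw [hshift, ENNReal.tsum_mul_left]
    _ = r * ∫⁻ _, 1 ∂(poissonMeasure r) := by rw [lintegral_countable']; simp only [one_mul]
    _ = r := by rw [lintegral_one, measure_univ, mul_one]

end Poisson

/-- Counts `N 1, N 2, …` of a unit-rate Poisson process over successive intervals of length `Δt`:
`N (k + 1)` is known at time `k + 1`, independent of the past `F k`, and `Poisson(Δt)` under `Q`.
Nothing is asked of `N 0`. -/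
structure IsPoissonCounts {Ω : Type*} {m0 : MeasurableSpace Ω} (Q : Measure Ω)
    (F : Filtration ℕ m0) (Δt : ℝ≥0) (N : ℕ → Ω → ℕ) : Prop where
  measurable (k : ℕ) : Measurable[F (k + 1)] (N (k + 1))
  indep (k : ℕ) : Indep (MeasurableSpace.comap (N (k + 1)) inferInstance) (F k) Q
  map_eq (k : ℕ) : Q.map (N (k + 1)) = poissonMeasure Δt

/-- A nonnegative intensity whose value `lam (k + 1)` on the interval from `k` to `k + 1` is known
at time `k`. Nothing is asked of `lam 0`. -/
structure IsPredictableIntensity {Ω : Type*} {m0 : MeasurableSpace Ω} (F : Filtration ℕ m0)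
    (lam : ℕ → Ω → ℝ) : Prop where
  measurable (k : ℕ) : Measurable[F k] (lam (k + 1))
  nonneg (k : ℕ) (ω : Ω) : 0 ≤ lam (k + 1) ω

section Girsanov

variable {Ω : Type*} {m0 : MeasurableSpace Ω} {Q : Measure Ω} {F : Filtration ℕ m0} {Δt : ℝ≥0}
  {N : ℕ → Ω → ℕ} {lam : ℕ → Ω → ℝ}

/-- The Girsanov density process: the likelihood ratio of the first `n` counts, which turns the unit
intensity into `lam`. -/
noncomputable def girsanovDensity (Δt : ℝ≥0) (N : ℕ → Ω → ℕ) (lam : ℕ → Ω → ℝ) (n : ℕ) (ω : Ω) :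
    ℝ :=
  ∏ k ∈ Finset.Icc 1 n, poissonLikelihoodRatio Δt (lam k ω) (N k ω)

/-- The measure obtained from `Q` by changing the intensity of the first `n` counts to `lam`. -/
noncomputable def girsanovMeasure (Q : Measure Ω) (Δt : ℝ≥0) (N : ℕ → Ω → ℕ) (lam : ℕ → Ω → ℝ)
    (n : ℕ) : Measure Ω :=
  Q.withDensity fun ω ↦ ENNReal.ofReal (girsanovDensity Δt N lam n ω)

/-- The innovation process: the counts minus their integrated intensity. -/
noncomputable def innovation (Δt : ℝ≥0) (N : ℕ → Ω → ℕ) (lam : ℕ → Ω → ℝ) (k : ℕ) (ω : Ω) : ℝ :=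
  ∑ i ∈ Finset.Icc 1 k, ((N i ω : ℝ) - lam i ω * Δt)

lemma girsanovDensity_succ (n : ℕ) (ω : Ω) :
    girsanovDensity Δt N lam (n + 1) ω = girsanovDensity Δt N lam n ω *
      poissonLikelihoodRatio Δt (lam (n + 1) ω) (N (n + 1) ω) :=
  Finset.prod_Icc_succ_top n.succ_pos _

lemma girsanovMeasure_zero : girsanovMeasure Q Δt N lam 0 = Q := by
  simp [girsanovMeasure, girsanovDensity]

lemma innovation_succ (k : ℕ) :
    innovation Δt N lam (k + 1) = innovation Δt N lam k +
      ((fun ω ↦ (N (k + 1) ω : ℝ)) - fun ω ↦ lam (k + 1) ω * Δt) :=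
  funext fun _ ↦ Finset.sum_Icc_succ_top k.succ_pos _

lemma measurable_lintegral_poissonMeasure_intensity (hlam : IsPredictableIntensity F lam) (k : ℕ)
    (Δt : ℝ≥0) (h : ℕ → ℝ≥0∞) :
    Measurable[F k] fun ω ↦ ∫⁻ j, h j ∂(poissonMeasure ((lam (k + 1) ω).toNNReal * Δt)) :=
  (Measure.measurable_lintegral .of_discrete).comp
    (measurable_poissonMeasure.comp ((hlam.measurable k).real_toNNReal.mul_const Δt))

lemma measurable_girsanovDensity (hN : IsPoissonCounts Q F Δt N)
    (hlam : IsPredictableIntensity F lam) (n : ℕ) :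
    Measurable[F n] (girsanovDensity Δt N lam n) := by
  induction n with
  | zero => exact measurable_const
  | succ n ih =>
    have hle : F n ≤ F (n + 1) := F.mono n.le_succ
    rw [funext (girsanovDensity_succ n)]
    exact (ih.mono hle le_rfl).mul ((measurable_poissonLikelihoodRatio Δt).comp
      (((hlam.measurable n).mono hle le_rfl).prodMk (hN.measurable n)))

lemma stronglyMeasurable_innovation (hN : IsPoissonCounts Q F Δt N)
    (hlam : IsPredictableIntensity F lam) (k : ℕ) :
    StronglyMeasurable[F k] (innovation Δt N lam k) := by
  induction k with
  | zero => exact stronglyMeasurable_const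
  | succ k ih =>
    have hle : F k ≤ F (k + 1) := F.mono k.le_succ
    have hcount : Measurable[F (k + 1)] fun ω ↦ (N (k + 1) ω : ℝ) :=
      measurable_from_nat.comp (hN.measurable k)
    have hcomp : Measurable[F (k + 1)] fun ω ↦ lam (k + 1) ω * (Δt : ℝ) :=
      ((hlam.measurable k).mono hle le_rfl).mul_const _
    rw [innovation_succ]
    exact (ih.mono hle).add (hcount.sub hcomp).stronglyMeasurable

lemma lintegral_girsanovMeasure (hN : IsPoissonCounts Q F Δt N)
    (hlam : IsPredictableIntensity F lam) (n : ℕ) {W : Ω → ℝ≥0∞} (hW : Measurable W) :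
    ∫⁻ ω, W ω ∂(girsanovMeasure Q Δt N lam n) =
      ∫⁻ ω, ENNReal.ofReal (girsanovDensity Δt N lam n ω) * W ω ∂Q :=
  lintegral_withDensity_eq_lintegral_mul _
    ((measurable_girsanovDensity hN hlam n).mono (F.le n) le_rfl).ennreal_ofReal hW

lemma lintegral_mul_likelihoodRatio_mul_comp [IsFiniteMeasure Q] (hN : IsPoissonCounts Q F Δt N)
    (hlam : IsPredictableIntensity F lam) {k : ℕ} {W : Ω → ℝ≥0∞} (hW : Measurable[F k] W)
    (h : ℕ → ℝ≥0∞) :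
    ∫⁻ ω, W ω * (ENNReal.ofReal (poissonLikelihoodRatio Δt (lam (k + 1) ω) (N (k + 1) ω)) *
        h (N (k + 1) ω)) ∂Q =
      ∫⁻ ω, W ω * ∫⁻ j, h j ∂(poissonMeasure ((lam (k + 1) ω).toNNReal * Δt)) ∂Q := by
  let f : ℕ × ℝ≥0∞ × ℝ → ℝ≥0∞ := fun p ↦
    p.2.1 * (ENNReal.ofReal (poissonLikelihoodRatio Δt p.2.2 p.1) * h p.1)
  have hf : Measurable f := by
    have hratio := (measurable_poissonLikelihoodRatio Δt).comp
      (measurable_snd.snd.prodMk measurable_fst : Measurable fun p : ℕ × ℝ≥0∞ × ℝ ↦ (p.2.2, p.1))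
    exact measurable_snd.fst.mul
      (hratio.ennreal_ofReal.mul (Measurable.of_discrete.comp measurable_fst))
  have hpast : Measurable[F k] fun ω ↦ (W ω, lam (k + 1) ω) := hW.prodMk (hlam.measurable k)
  have hindep : IndepFun (N (k + 1)) (fun ω ↦ (W ω, lam (k + 1) ω)) Q :=
    (IndepFun_iff_Indep _ _ _).2 (indep_of_indep_of_le_right (hN.indep k) hpast.comap_le)
  calc _ = ∫⁻ ω, ∫⁻ j, f (j, W ω, lam (k + 1) ω) ∂(Q.map (N (k + 1))) ∂Q :=
        lintegral_comp_prodMk_of_indepFun hindep ((hN.measurable k).mono (F.le _) le_rfl)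
          (hpast.mono (F.le k) le_rfl) hf
    _ = _ := lintegral_congr fun ω ↦ by
        rw [hN.map_eq, lintegral_const_mul _ .of_discrete,
          lintegral_likelihoodRatio_mul_poissonMeasure Δt (hlam.nonneg k ω)]

lemma lintegral_mul_comp_girsanovMeasure_succ [IsFiniteMeasure Q] (hN : IsPoissonCounts Q F Δt N)
    (hlam : IsPredictableIntensity F lam) {k : ℕ} {W : Ω → ℝ≥0∞} (hW : Measurable[F k] W)
    (h : ℕ → ℝ≥0∞) :
    ∫⁻ ω, W ω * h (N (k + 1) ω) ∂(girsanovMeasure Q Δt N lam (k + 1)) =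
      ∫⁻ ω, W ω * ∫⁻ j, h j ∂(poissonMeasure ((lam (k + 1) ω).toNNReal * Δt))
        ∂(girsanovMeasure Q Δt N lam k) := by
  have hZW : Measurable[F k] fun ω ↦ ENNReal.ofReal (girsanovDensity Δt N lam k ω) * W ω :=
    (measurable_girsanovDensity hN hlam k).ennreal_ofReal.mul hW
  have hcount : Measurable fun ω ↦ h (N (k + 1) ω) :=
    measurable_from_nat.comp ((hN.measurable k).mono (F.le _) le_rfl)
  have hmean := (measurable_lintegral_poissonMeasure_intensity hlam k Δt h).mono (F.le k) le_rfl
  have hW₀ := hW.mono (F.le k) le_rfl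
  rw [lintegral_girsanovMeasure hN hlam _ (hW₀.fun_mul hcount),
    lintegral_girsanovMeasure hN hlam _ (hW₀.fun_mul hmean)]
  simp_rw [← mul_assoc]
  rw [← lintegral_mul_likelihoodRatio_mul_comp hN hlam hZW h]
  refine lintegral_congr fun ω ↦ ?_
  rw [girsanovDensity_succ, mul_comm (girsanovDensity Δt N lam k ω),
    ENNReal.ofReal_mul (poissonLikelihoodRatio_nonneg Δt (hlam.nonneg k ω) _)]
  ring

lemma lintegral_girsanovMeasure_of_le [IsFiniteMeasure Q] (hN : IsPoissonCounts Q F Δt N)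
    (hlam : IsPredictableIntensity F lam) {k n : ℕ} (hkn : k ≤ n) {W : Ω → ℝ≥0∞}
    (hW : Measurable[F k] W) :
    ∫⁻ ω, W ω ∂(girsanovMeasure Q Δt N lam n) = ∫⁻ ω, W ω ∂(girsanovMeasure Q Δt N lam k) := by
  induction n, hkn using Nat.le_induction with
  | base => rfl
  | succ n hkn ih =>
    simpa [ih] using
      lintegral_mul_comp_girsanovMeasure_succ hN hlam (hW.mono (F.mono hkn) le_rfl) fun _ ↦ 1

lemma isProbabilityMeasure_girsanovMeasure [IsProbabilityMeasure Q] (hN : IsPoissonCounts Q F Δt N)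
    (hlam : IsPredictableIntensity F lam) (n : ℕ) :
    IsProbabilityMeasure (girsanovMeasure Q Δt N lam n) where
  measure_univ := by
    simpa [girsanovMeasure_zero] using
      lintegral_girsanovMeasure_of_le hN hlam n.zero_le (measurable_const (a := (1 : ℝ≥0∞)))

lemma integrable_intensity_of_le [IsProbabilityMeasure Q] (hN : IsPoissonCounts Q F Δt N)
    (hlam : IsPredictableIntensity F lam) {C : ℝ} {k : ℕ} (hC : ∀ ω, lam (k + 1) ω ≤ C) (n : ℕ) :
    Integrable (lam (k + 1)) (girsanovMeasure Q Δt N lam n) := by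
  have := isProbabilityMeasure_girsanovMeasure hN hlam n
  refine Integrable.of_bound ((hlam.measurable k).mono (F.le k) le_rfl).aestronglyMeasurable C
    (ae_of_all _ fun ω ↦ ?_)
  rw [Real.norm_of_nonneg (hlam.nonneg k ω)]
  exact hC ω

lemma condLExp_comp_count [IsProbabilityMeasure Q] (hN : IsPoissonCounts Q F Δt N)
    (hlam : IsPredictableIntensity F lam) {k n : ℕ} (hkn : k < n) (h : ℕ → ℝ≥0∞) :
    (girsanovMeasure Q Δt N lam n)⁻[fun ω ↦ h (N (k + 1) ω) | F k]
      =ᵐ[girsanovMeasure Q Δt N lam n]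
        fun ω ↦ ∫⁻ j, h j ∂(poissonMeasure ((lam (k + 1) ω).toNNReal * Δt)) := by
  have := isProbabilityMeasure_girsanovMeasure hN hlam n
  have hmean := measurable_lintegral_poissonMeasure_intensity hlam k Δt h
  have hcount : Measurable[F (k + 1)] fun ω ↦ h (N (k + 1) ω) :=
    measurable_from_nat.comp (hN.measurable k)
  refine (ae_eq_condLExp (F.le k) _ _ hmean fun s hs ↦ ?_).symm
  have hind : Measurable[F k] (s.indicator fun _ ↦ (1 : ℝ≥0∞)) := measurable_const.indicator hs
  have hsetLIntegral (g : Ω → ℝ≥0∞) : ∫⁻ ω in s, g ω ∂(girsanovMeasure Q Δt N lam n) =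
      ∫⁻ ω, s.indicator (fun _ ↦ 1) ω * g ω ∂(girsanovMeasure Q Δt N lam n) := by
    rw [← lintegral_indicator (F.le k s hs)]
    simp only [← Set.indicator_mul_left, one_mul]
  rw [hsetLIntegral, hsetLIntegral,
    lintegral_girsanovMeasure_of_le hN hlam hkn.le (hind.fun_mul hmean),
    lintegral_girsanovMeasure_of_le hN hlam hkn
      ((hind.mono (F.mono k.le_succ) le_rfl).fun_mul hcount)]
  exact (lintegral_mul_comp_girsanovMeasure_succ hN hlam hind h).symm

lemma condLExp_count [IsProbabilityMeasure Q] (hN : IsPoissonCounts Q F Δt N)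
    (hlam : IsPredictableIntensity F lam) {k n : ℕ} (hkn : k < n) :
    (girsanovMeasure Q Δt N lam n)⁻[fun ω ↦ (N (k + 1) ω : ℝ≥0∞) | F k]
      =ᵐ[girsanovMeasure Q Δt N lam n] fun ω ↦ ENNReal.ofReal (lam (k + 1) ω * Δt) := by
  filter_upwards [condLExp_comp_count hN hlam hkn Nat.cast] with ω hω
  rw [hω, lintegral_natCast_poissonMeasure, ENNReal.ofReal_mul (hlam.nonneg k ω),
    ENNReal.ofReal_coe_nnreal, ENNReal.coe_mul]
  rfl

lemma lintegral_count_ne_top [IsProbabilityMeasure Q] (hN : IsPoissonCounts Q F Δt N)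
    (hlam : IsPredictableIntensity F lam) {k n : ℕ} (hkn : k < n)
    (hint : Integrable (lam (k + 1)) (girsanovMeasure Q Δt N lam n)) :
    ∫⁻ ω, (N (k + 1) ω : ℝ≥0∞) ∂(girsanovMeasure Q Δt N lam n) ≠ ∞ := by
  have := isProbabilityMeasure_girsanovMeasure hN hlam n
  rw [← lintegral_condLExp (F.le k), lintegral_congr_ae (condLExp_count hN hlam hkn)]
  exact (hint.mul_const _).lintegral_lt_top.ne

lemma integrable_count [IsProbabilityMeasure Q] (hN : IsPoissonCounts Q F Δt N)
    (hlam : IsPredictableIntensity F lam) {k n : ℕ} (hkn : k < n)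
    (hint : Integrable (lam (k + 1)) (girsanovMeasure Q Δt N lam n)) :
    Integrable (fun ω ↦ (N (k + 1) ω : ℝ)) (girsanovMeasure Q Δt N lam n) := by
  have hcount : Measurable fun ω ↦ (N (k + 1) ω : ℝ≥0∞) :=
    measurable_from_nat.comp ((hN.measurable k).mono (F.le _) le_rfl)
  simpa using integrable_toReal_of_lintegral_ne_top hcount.aemeasurable
    (lintegral_count_ne_top hN hlam hkn hint)

lemma condExp_count [IsProbabilityMeasure Q] (hN : IsPoissonCounts Q F Δt N)
    (hlam : IsPredictableIntensity F lam) {k n : ℕ} (hkn : k < n)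
    (hint : Integrable (lam (k + 1)) (girsanovMeasure Q Δt N lam n)) :
    (girsanovMeasure Q Δt N lam n)[fun ω ↦ (N (k + 1) ω : ℝ) | F k]
      =ᵐ[girsanovMeasure Q Δt N lam n] fun ω ↦ lam (k + 1) ω * Δt := by
  have hcount : Measurable fun ω ↦ (N (k + 1) ω : ℝ≥0∞) :=
    measurable_from_nat.comp ((hN.measurable k).mono (F.le _) le_rfl)
  have htoReal := toReal_condLExp (F k) hcount.aemeasurable
    (lintegral_count_ne_top hN hlam hkn hint)
  simp only [ENNReal.toReal_natCast] at htoReal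
  filter_upwards [htoReal, condLExp_count hN hlam hkn] with ω hω hmean
  rw [← hω, hmean, ENNReal.toReal_ofReal (mul_nonneg (hlam.nonneg k ω) Δt.coe_nonneg)]

lemma integrable_innovation [IsProbabilityMeasure Q] (hN : IsPoissonCounts Q F Δt N)
    (hlam : IsPredictableIntensity F lam) {n : ℕ}
    (hint : ∀ k < n, Integrable (lam (k + 1)) (girsanovMeasure Q Δt N lam n)) {k : ℕ}
    (hkn : k ≤ n) : Integrable (innovation Δt N lam k) (girsanovMeasure Q Δt N lam n) := by
  induction k with
  | zero => exact integrable_zero _ _ _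
  | succ k ih =>
    rw [innovation_succ]
    exact (ih (k.le_succ.trans hkn)).add
      ((integrable_count hN hlam hkn (hint k hkn)).sub ((hint k hkn).mul_const _))

lemma condExp_innovation_succ [IsProbabilityMeasure Q] (hN : IsPoissonCounts Q F Δt N)
    (hlam : IsPredictableIntensity F lam) {n : ℕ}
    (hint : ∀ k < n, Integrable (lam (k + 1)) (girsanovMeasure Q Δt N lam n)) {k : ℕ}
    (hkn : k < n) :
    (girsanovMeasure Q Δt N lam n)[innovation Δt N lam (k + 1) | F k]
      =ᵐ[girsanovMeasure Q Δt N lam n] innovation Δt N lam k := by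
  have := isProbabilityMeasure_girsanovMeasure hN hlam n
  have hM := integrable_innovation hN hlam hint hkn.le
  have hcount := integrable_count hN hlam hkn (hint k hkn)
  have hcomp := (hint k hkn).mul_const (Δt : ℝ)
  have hM_condExp := condExp_of_stronglyMeasurable (F.le k)
    (stronglyMeasurable_innovation hN hlam k) hM
  have hcomp_condExp := condExp_of_stronglyMeasurable (F.le k)
    ((hlam.measurable k).mul_const (Δt : ℝ)).stronglyMeasurable hcomp
  rw [innovation_succ]
  filter_upwards [condExp_add hM (hcount.sub hcomp) (F k), condExp_sub hcount hcomp (F k),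
    condExp_count hN hlam hkn (hint k hkn)] with ω hadd hsub hmean
  rw [hadd, Pi.add_apply, hM_condExp, hsub, Pi.sub_apply, hmean, hcomp_condExp, sub_self, add_zero]

theorem innovation_martingale_under_new_measure_general [IsProbabilityMeasure Q]
    (hN : IsPoissonCounts Q F Δt N) (hlam : IsPredictableIntensity F lam) (n : ℕ)
    (hint : ∀ k < n, Integrable (lam (k + 1)) (girsanovMeasure Q Δt N lam n)) :
    (∀ k, k ≤ n → StronglyMeasurable[F k] (innovation Δt N lam k)) ∧
    (∀ k, k ≤ n → Integrable (innovation Δt N lam k) (girsanovMeasure Q Δt N lam n)) ∧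
    (∀ k, k + 1 ≤ n → (girsanovMeasure Q Δt N lam n)[innovation Δt N lam (k + 1) | F k]
      =ᵐ[girsanovMeasure Q Δt N lam n] innovation Δt N lam k) :=
  ⟨fun k _ ↦ stronglyMeasurable_innovation hN hlam k,
    fun _ hkn ↦ integrable_innovation hN hlam hint hkn,
    fun _ hkn ↦ condExp_innovation_succ hN hlam hint hkn⟩

end Girsanov

/-- Discrete-time analogue of the second assertion of Theorem 1 of the paper: under the
changed measure `dP = Z_n dQ`, with `Z_n = ∏_{k=1}^n λ_k^{N_k} exp(−(λ_k−1)Δt)`, the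
compensated process `M_k = ∑_{i=1}^k (N_i − λ_i·Δt)`, `0 ≤ k ≤ n`, is a martingale with
respect to the filtration `F` under `P`. -/
theorem innovation_martingale_under_new_measure {Ω : Type*} [m0 : MeasurableSpace Ω]
    (Q : Measure Ω) [IsProbabilityMeasure Q] (F : Filtration ℕ m0)
    (Δt : ℝ) (hΔt : 0 < Δt)
    (N : ℕ → Ω → ℕ)
    (hNmeas : ∀ k, 1 ≤ k → Measurable[F k] (N k))
    (hNindep : ∀ k, 1 ≤ k →
      Indep (MeasurableSpace.comap (N k) inferInstance) (F (k - 1)) Q)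
    (hNlaw : ∀ k, 1 ≤ k → Q.map (N k) = poissonMeasure Δt.toNNReal)
    (C : ℝ) (lam : ℕ → Ω → ℝ)
    (hlammeas : ∀ k, 1 ≤ k → Measurable[F (k - 1)] (lam k))
    (hlampos : ∀ k, 1 ≤ k → ∀ ω, 0 < lam k ω)
    (hlambdd : ∀ k, 1 ≤ k → ∀ ω, lam k ω ≤ C)
    (n : ℕ) (hn : 1 ≤ n)
    (Zn : Ω → ℝ)
    (hZn : ∀ ω, Zn ω =
      ∏ k ∈ Finset.Icc 1 n, lam k ω ^ N k ω * Real.exp (-(lam k ω - 1) * Δt))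
    (P : Measure Ω) (hP : P = Q.withDensity (fun ω => ENNReal.ofReal (Zn ω)))
    (M : ℕ → Ω → ℝ)
    (hM : ∀ k ω, M k ω = ∑ i ∈ Finset.Icc 1 k, ((N i ω : ℝ) - lam i ω * Δt)) :
    (∀ k, k ≤ n → StronglyMeasurable[F k] (M k)) ∧
    (∀ k, k ≤ n → Integrable (M k) P) ∧
    (∀ k, k + 1 ≤ n → P[M (k + 1) | F k] =ᵐ[P] M k) := by
  lift Δt to ℝ≥0 using hΔt.le
  obtain rfl : Zn = girsanovDensity Δt N lam n := funext hZn
  obtain rfl : M = innovation Δt N lam := funext₂ hM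
  subst hP
  have hcounts : IsPoissonCounts Q F Δt N :=
    ⟨fun k ↦ hNmeas _ k.succ_pos, fun k ↦ hNindep _ k.succ_pos,
      fun k ↦ by simpa using hNlaw _ k.succ_pos⟩
  have hintensity : IsPredictableIntensity F lam :=
    ⟨fun k ↦ hlammeas _ k.succ_pos, fun k ω ↦ (hlampos _ k.succ_pos ω).le⟩
  exact innovation_martingale_under_new_measure_general hcounts hintensity n fun k _ ↦
    integrable_intensity_of_le hcounts hintensity (hlambdd _ k.succ_pos) n
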